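/- arXiv:2011.07056 — 4 statements merged into one kernel-verified Lean document; each statement's English description precedes it below -/
import Mathlib

section
/- There is an absolute constant C > 0 such that for every finite set U = {u_1 < u_2 < ... < u_k} of positive integers and every integer N ≥ 2, G'_U(N) ≤ G_U(N) ≤ C·(u_k + 1)^2·(log N)·G'_U(N). -/
/-- `G'U U N` : the minimum cardinality of a finite set `B ⊆ ℤ` containing a `U`-pattern
`{x + r·u : u ∈ U}` (with `r ≠ 0`) for `N` distinct integer basepoints `x`. -/
noncomputable def G'U (U : Finset ℤ) (N : ℕ) : ℕ :=
  sInf { m | ∃ B : Finset ℤ, B.card = m ∧ ∃ X : Finset ℤ, X.card = N ∧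
    ∀ x ∈ X, ∃ r : ℤ, r ≠ 0 ∧ ∀ u ∈ U, x + r * u ∈ B }

/-- `GU U N` : the minimum cardinality of a finite set `B ⊆ ℤ` containing a `U`-pattern
(with nonzero scaling factor) with basepoint `x` for every `x ∈ {1, …, N}`. -/
noncomputable def GU (U : Finset ℤ) (N : ℕ) : ℕ :=
  sInf { m | ∃ B : Finset ℤ, B.card = m ∧
    ∀ x ∈ Finset.Icc (1 : ℤ) (N : ℤ), ∃ r : ℤ, r ≠ 0 ∧ ∀ u ∈ U, x + r * u ∈ B }

/-- Lifting from residues to integers. -/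
lemma lift_bound (U : Finset ℤ) (K N : ℕ) (hN : 0 < N) (hpos : ∀ u ∈ U, 0 < u)
    (hK : ∀ u ∈ U, u ≤ K) (D : Finset (ZMod N))
    (hD : ∀ z : ZMod N, ∃ c : ZMod N, ∀ u ∈ U, z + c * (u : ZMod N) ∈ D) :
    GU U N ≤ D.card * (K + 2) := by
  classical
  haveI : NeZero N := ⟨hN.ne'⟩
  set B : Finset ℤ := (D ×ˢ Finset.range (K + 2)).image
    (fun p => ((p.1.val : ℤ) + N * (p.2 : ℤ))) with hB
  have hcard : B.card ≤ D.card * (K + 2) := by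
    refine Finset.card_image_le.trans ?_
    simp
  refine le_trans (Nat.sInf_le ⟨B, rfl, ?_⟩) hcard
  intro x hx
  rw [Finset.mem_Icc] at hx
  obtain ⟨c, hc⟩ := hD (x : ZMod N)
  have hcl : ((c - 1).val : ℤ) < N := by exact_mod_cast ZMod.val_lt (c - 1)
  refine ⟨((c - 1).val : ℤ) + 1, by positivity, ?_⟩
  intro u hu
  set r : ℤ := ((c - 1).val : ℤ) + 1 with hr
  have hr0 : 0 < r := by positivity
  have hrN : r ≤ N := by omega
  have hrc : (r : ZMod N) = c := by
    rw [hr]; push_cast; rw [ZMod.natCast_zmod_val]; ring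
  have hy0 : 0 ≤ x + r * u := by
    have := mul_pos hr0 (hpos u hu)
    omega
  have hyN : x + r * u ≤ N * (K + 1) := by
    have : r * u ≤ N * K := mul_le_mul hrN (hK u hu) (hpos u hu).le (by positivity)
    nlinarith
  obtain ⟨y, hy⟩ := Int.eq_ofNat_of_zero_le hy0
  rw [hy] at hyN ⊢
  have hyN' : y ≤ N * (K + 1) := by exact_mod_cast hyN
  have hmem : (y : ZMod N) ∈ D := by
    have h := hc u hu
    have h2 : ((x + r * u : ℤ) : ZMod N) = (y : ZMod N) := by rw [hy]; simp
    rw [← h2]; push_cast; rw [hrc]; exact h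
  rw [hB, Finset.mem_image]
  refine ⟨((y : ZMod N), y / N), ?_, ?_⟩
  · rw [Finset.mem_product]
    refine ⟨hmem, ?_⟩
    rw [Finset.mem_range]
    have : y / N ≤ K + 1 := Nat.div_le_of_le_mul hyN'
    show y / N < K + 2
    omega
  · simp only [ZMod.val_natCast]
    exact_mod_cast Nat.mod_add_div y N

/-- One greedy step. -/
lemma greedy_step (N : ℕ) [NeZero N] (S A : Finset (ZMod N)) (hS : N ≤ 4 * S.card) :
    ∃ t : ZMod N, A.card ≤ 4 * (A.filter (fun a => a - t ∈ S)).card := by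
  classical
  by_contra! h
  have h1 : ∑ t : ZMod N, 4 * (A.filter (fun a => a - t ∈ S)).card < ∑ t : ZMod N, A.card :=
    Finset.sum_lt_sum_of_nonempty Finset.univ_nonempty (fun t _ => h t)
  have h2 : ∑ t : ZMod N, (A.filter (fun a => a - t ∈ S)).card = A.card * S.card := by
    simp only [Finset.card_filter]
    rw [Finset.sum_comm]
    have : ∀ a ∈ A, ∑ t : ZMod N, (if a - t ∈ S then 1 else 0) = S.card := by
      intro a _
      rw [← Finset.card_filter]
      refine Finset.card_bij (fun t _ => a - t) ?_ ?_ ?_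
      · intro t ht; simpa using ht
      · intro t _ t' _ h; simpa using h
      · intro s hs; exact ⟨a - s, by simpa using hs, by simp⟩
    rw [Finset.sum_congr rfl this]; simp
  rw [← Finset.mul_sum, h2] at h1
  simp [ZMod.card] at h1
  nlinarith [Nat.zero_le A.card]

lemma greedy (N : ℕ) [NeZero N] (S : Finset (ZMod N)) (hS : N ≤ 4 * S.card) (k : ℕ) :
    ∃ T A : Finset (ZMod N), T.card ≤ k ∧ A.card * 4 ^ k ≤ 3 ^ k * N ∧
      ∀ z, z ∉ A → ∃ t ∈ T, z - t ∈ S := by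
  classical
  induction k with
  | zero => exact ⟨∅, Finset.univ, by simp, by simp [ZMod.card], by simp⟩
  | succ k ih =>
    obtain ⟨T, A, hT, hA, hcov⟩ := ih
    obtain ⟨t, ht⟩ := greedy_step N S A hS
    refine ⟨insert t T, A.filter (fun a => ¬ (a - t ∈ S)), ?_, ?_, ?_⟩
    · exact (Finset.card_insert_le _ _).trans (by omega)
    · have h := Finset.card_filter_add_card_filter_not (s := A) (fun a => a - t ∈ S)
      have h3 : 4 * (A.filter (fun a => ¬ (a - t ∈ S))).card ≤ 3 * A.card := by omega
      calc _ = (4 * (A.filter (fun a => ¬ (a - t ∈ S))).card) * 4 ^ k := by ring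
        _ ≤ (3 * A.card) * 4 ^ k := Nat.mul_le_mul_right _ h3
        _ = 3 * (A.card * 4 ^ k) := by ring
        _ ≤ 3 * (3 ^ k * N) := Nat.mul_le_mul_left _ hA
        _ = _ := by ring
    · intro z hz
      by_cases hzA : z ∈ A
      · refine ⟨t, by simp, ?_⟩
        by_contra hh
        exact hz (by simp [hzA, hh])
      · obtain ⟨t', ht', h'⟩ := hcov z hzA
        exact ⟨t', by simp [ht'], h'⟩

lemma covering (N : ℕ) [NeZero N] (hN : 2 ≤ N) (S : Finset (ZMod N)) (hS : N ≤ 4 * S.card) :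
    ∃ T : Finset (ZMod N), (T.card : ℝ) ≤ 6 * Real.log N ∧ ∀ z, ∃ t ∈ T, z - t ∈ S := by
  have hN0 : (0 : ℝ) < N := by positivity
  have hlog : 1 / 2 ≤ Real.log N := by
    have h1 : Real.log 2 ≤ Real.log N :=
      Real.log_le_log (by norm_num) (by exact_mod_cast hN)
    linarith [Real.log_two_gt_d9]
  obtain ⟨T, A, hT, hA, hcov⟩ := greedy N S hS (⌊4 * Real.log N⌋₊ + 1)
  set k := ⌊4 * Real.log N⌋₊ + 1 with hk
  have hk1 : 4 * Real.log N < k := by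
    rw [hk]; push_cast; exact Nat.lt_floor_add_one _
  have hk2 : (k : ℝ) ≤ 4 * Real.log N + 1 := by
    rw [hk]; push_cast
    linarith [Nat.floor_le (show 0 ≤ 4 * Real.log N by linarith)]
  have hA0 : A.card = 0 := by
    by_contra hne
    have hge : 1 ≤ A.card := Nat.one_le_iff_ne_zero.mpr hne
    have h1 : 4 ^ k ≤ 3 ^ k * N := le_trans (Nat.le_mul_of_pos_left _ hge) hA
    have h2 : (4 : ℝ) ^ k ≤ 3 ^ k * N := by exact_mod_cast h1
    have h3 : (3 / 4 : ℝ) ≤ Real.exp (-(1 / 4)) := by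
      have := Real.add_one_le_exp (-(1 / 4) : ℝ); linarith
    have h4 : (3 / 4 : ℝ) ^ k ≤ Real.exp (-(k / 4)) := by
      calc (3 / 4 : ℝ) ^ k ≤ (Real.exp (-(1 / 4))) ^ k := pow_le_pow_left₀ (by norm_num) h3 k
        _ = _ := by rw [← Real.exp_nat_mul]; congr 1; ring
    have h5 : (1 : ℝ) ≤ (3 / 4) ^ k * N := by
      rw [div_pow, div_mul_eq_mul_div, le_div_iff₀ (by positivity)]; linarith
    have h6 : (3 / 4 : ℝ) ^ k * N < 1 := by
      calc (3 / 4 : ℝ) ^ k * N ≤ Real.exp (-(k / 4)) * N := by gcongr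
        _ = Real.exp (-(k / 4)) * Real.exp (Real.log N) := by rw [Real.exp_log hN0]
        _ = Real.exp (-(k / 4) + Real.log N) := by rw [Real.exp_add]
        _ < 1 := by rw [Real.exp_lt_one_iff]; linarith
    linarith
  refine ⟨T, ?_, fun z => hcov z (by rw [Finset.card_eq_zero.mp hA0]; simp)⟩
  have : (T.card : ℝ) ≤ k := by exact_mod_cast hT
  linarith

/-- The compression map. -/
def phi (P N : ℕ) (l : ZMod P) (x : ℤ) : ZMod N := (((l * (x : ZMod P)).val : ℕ) : ZMod N)

lemma collision (P N : ℕ) [Fact P.Prime] (hN : 0 < N) (hP : N ≤ P) (x y : ℤ)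
    (hxy : (x : ZMod P) ≠ (y : ZMod P)) :
    N * (Finset.univ.filter (fun l : ZMod P => phi P N l x = phi P N l y)).card ≤ 3 * P := by
  classical
  set d : ZMod P := (x : ZMod P) - y with hd
  have hd0 : d ≠ 0 := sub_ne_zero.mpr hxy
  have hsub : (Finset.univ.filter (fun l : ZMod P => phi P N l x = phi P N l y)) ⊆
      (Finset.Icc (-((P / N : ℕ) : ℤ)) ((P / N : ℕ) : ℤ)).image
        (fun k : ℤ => ((N * k : ℤ) : ZMod P) * d⁻¹) := by
    intro l hl
    rw [Finset.mem_filter] at hl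
    have h := hl.2
    unfold phi at h
    set a := (l * (x : ZMod P)).val with ha
    set b := (l * (y : ZMod P)).val with hb
    have haP : a < P := ZMod.val_lt _
    have hbP : b < P := ZMod.val_lt _
    have hdvd : (N : ℤ) ∣ (a : ℤ) - b := by
      rw [← ZMod.intCast_zmod_eq_zero_iff_dvd] <;> try exact ⟨hN.ne'⟩
      push_cast; rw [h]; ring
    obtain ⟨k, hk⟩ := hdvd
    rw [Finset.mem_image]
    refine ⟨k, ?_, ?_⟩
    · rw [Finset.mem_Icc]
      have hN' : (0 : ℤ) < N := by exact_mod_cast hN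
      push_cast
      constructor
      · have : -k ≤ (P : ℤ) / N := by
          rw [Int.le_ediv_iff_mul_le hN']; nlinarith
        linarith
      · rw [Int.le_ediv_iff_mul_le hN']; nlinarith
    · show ((N * k : ℤ) : ZMod P) * d⁻¹ = l
      rw [← hk]; push_cast
      rw [ha, hb, ZMod.natCast_zmod_val, ZMod.natCast_zmod_val, ← mul_sub, ← hd]
      field_simp
  have hc := (Finset.card_le_card hsub).trans Finset.card_image_le
  rw [Int.card_Icc] at hc
  have h1 : (((P / N : ℕ) : ℤ) + 1 - -((P / N : ℕ) : ℤ)).toNat = 2 * (P / N) + 1 := by omega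
  rw [h1] at hc
  calc _ ≤ N * (2 * (P / N) + 1) := Nat.mul_le_mul_left _ hc
    _ = 2 * (N * (P / N)) + N := by ring
    _ ≤ 2 * P + P := by have := Nat.mul_div_le P N; omega
    _ = _ := by ring

lemma exists_good (P N : ℕ) [Fact P.Prime] (hN : 0 < N) (hP : N ≤ P) (X : Finset ℤ)
    (hX : X.card = N) (hinj : ∀ x ∈ X, ∀ y ∈ X, x ≠ y → (x : ZMod P) ≠ (y : ZMod P)) :
    ∃ l : ZMod P, N ≤ 4 * (X.image (phi P N l)).card := by
  classical
  have hP0 : 0 < P := by omega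
  -- total number of collisions
  have htot : ∑ l : ZMod P, ((X ×ˢ X).filter (fun p => phi P N l p.1 = phi P N l p.2)).card
      ≤ ∑ l : ZMod P, 4 * N := by
    simp only [Finset.card_filter]
    rw [Finset.sum_comm]
    simp only [← Finset.card_filter]
    rw [Finset.sum_product]
    have hx : ∀ x ∈ X, ∑ y ∈ X,
        (Finset.univ.filter (fun l : ZMod P => phi P N l x = phi P N l y)).card ≤ 4 * P := by
      intro x hx
      rw [← Finset.add_sum_erase _ _ hx]
      have h1 : (Finset.univ.filter (fun l : ZMod P => phi P N l x = phi P N l x)).card = P := by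
        simp [ZMod.card]
      rw [h1]
      have h2 : N * ∑ y ∈ X.erase x,
          (Finset.univ.filter (fun l : ZMod P => phi P N l x = phi P N l y)).card
          ≤ N * (3 * P) := by
        rw [Finset.mul_sum]
        calc _ ≤ ∑ y ∈ X.erase x, 3 * P := by
              refine Finset.sum_le_sum fun y hy => ?_
              rw [Finset.mem_erase] at hy
              exact collision P N hN hP x y (hinj x hx y hy.2 hy.1.symm)
          _ = (X.erase x).card * (3 * P) := by simp
          _ ≤ N * (3 * P) := by
              refine Nat.mul_le_mul_right _ ?_
              rw [← hX]; exact Finset.card_le_card (Finset.erase_subset _ _)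
      have h3 := Nat.le_of_mul_le_mul_left h2 hN
      omega
    calc _ ≤ ∑ x ∈ X, 4 * P := Finset.sum_le_sum hx
      _ = _ := by simp [hX, ZMod.card]; ring
  obtain ⟨l, -, hl⟩ := Finset.exists_le_of_sum_le Finset.univ_nonempty htot
  refine ⟨l, ?_⟩
  set f := phi P N l with hf
  have hpairs : ((X ×ˢ X).filter (fun p => f p.1 = f p.2)).card
      = ∑ z ∈ X.image f, (X.filter (fun x => f x = z)).card ^ 2 := by
    rw [Finset.card_eq_sum_card_fiberwise (f := fun p : ℤ × ℤ => f p.1) (t := X.image f)]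
    · refine Finset.sum_congr rfl fun z _ => ?_
      rw [sq, ← Finset.card_product]
      congr 1
      ext ⟨a, b⟩
      simp only [Finset.mem_filter, Finset.mem_product]
      constructor
      · rintro ⟨⟨⟨h1, h2⟩, h3⟩, h4⟩; exact ⟨⟨h1, h4⟩, h2, h3 ▸ h4⟩
      · rintro ⟨⟨h1, h4⟩, h2, h3⟩; exact ⟨⟨⟨h1, h2⟩, h4.trans h3.symm⟩, h4⟩
    · intro p hp
      simp only [Finset.coe_filter, Finset.mem_product, Set.mem_ofPred_eq] at hp
      exact Finset.mem_coe.mpr (Finset.mem_image_of_mem f hp.1.1)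
  have hsum : N = ∑ z ∈ X.image f, (X.filter (fun x => f x = z)).card := by
    exact hX.symm.trans (Finset.card_eq_sum_card_image f X)
  have hcs : (∑ z ∈ X.image f, (X.filter (fun x => f x = z)).card) ^ 2 ≤
      (X.image f).card * ∑ z ∈ X.image f, (X.filter (fun x => f x = z)).card ^ 2 :=
    sq_sum_le_card_mul_sum_sq
  rw [← hsum, ← hpairs] at hcs
  have : N * N ≤ N * (4 * (X.image f).card) := by
    calc N * N = N ^ 2 := by ring
      _ ≤ _ := hcs
      _ ≤ (X.image f).card * (4 * N) := Nat.mul_le_mul_left _ hl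
      _ = _ := by ring
  exact Nat.le_of_mul_le_mul_left this hN

lemma exists_prime (N : ℕ) (X : Finset ℤ) :
    ∃ P : ℕ, P.Prime ∧ N ≤ P ∧ ∀ x ∈ X, ∀ y ∈ X, x ≠ y → (x : ZMod P) ≠ (y : ZMod P) := by
  obtain ⟨P, hP, hpr⟩ := Nat.exists_infinite_primes (N + 2 * ∑ x ∈ X, x.natAbs + 1)
  refine ⟨P, hpr, by omega, ?_⟩
  intro x hx y hy hne h
  rw [ZMod.intCast_eq_intCast_iff_dvd_sub] at h
  have hxs : x.natAbs ≤ ∑ x ∈ X, x.natAbs :=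
    Finset.single_le_sum (f := fun x : ℤ => x.natAbs) (fun _ _ => Nat.zero_le _) hx
  have hys : y.natAbs ≤ ∑ x ∈ X, x.natAbs :=
    Finset.single_le_sum (f := fun x : ℤ => x.natAbs) (fun _ _ => Nat.zero_le _) hy
  have h0 : y - x = 0 := Int.eq_zero_of_abs_lt_dvd h (by rw [Int.abs_eq_natAbs]; omega)
  omega

/-- Approximate additivity of the compression map. -/
lemma phi_add (P N : ℕ) [Fact P.Prime] (l : ZMod P) (x r : ℤ) (u K : ℕ) (hu : u ≤ K) :
    ∃ j ∈ Finset.range (K + 1),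
      phi P N l x + phi P N l r * (u : ZMod N) = phi P N l (x + r * u) + ((j * P : ℕ) : ZMod N) := by
  have hP0 : 0 < P := (Fact.out : P.Prime).pos
  unfold phi
  set a := (l * (x : ZMod P)).val with ha
  set c := (l * (r : ZMod P)).val with hc
  have haP : a < P := ZMod.val_lt _
  have hcP : c < P := ZMod.val_lt _
  have hval : (l * ((x + r * u : ℤ) : ZMod P)).val = (a + c * u) % P := by
    rw [← ZMod.val_natCast]
    congr 1
    push_cast
    rw [ha, hc, ZMod.natCast_zmod_val, ZMod.natCast_zmod_val]
    ring
  refine ⟨(a + c * u) / P, ?_, ?_⟩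
  · rw [Finset.mem_range, Nat.div_lt_iff_lt_mul hP0]
    have : c * u ≤ P * K := Nat.mul_le_mul hcP.le hu
    nlinarith
  · rw [hval]
    have h := Nat.mod_add_div (a + c * u) P
    rw [← Nat.cast_add, mul_comm _ P, h]
    push_cast; rfl

lemma upper (U : Finset ℤ) (K N : ℕ) (hN : 2 ≤ N) (hpos : ∀ u ∈ U, 0 < u)
    (hK : ∀ u ∈ U, u ≤ K) (B X : Finset ℤ) (hX : X.card = N)
    (hB : ∀ x ∈ X, ∃ r : ℤ, r ≠ 0 ∧ ∀ u ∈ U, x + r * u ∈ B) :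
    (GU U N : ℝ) ≤ 12 * ((K : ℝ) + 1) ^ 2 * Real.log N * B.card := by
  classical
  haveI : NeZero N := ⟨by omega⟩
  obtain ⟨P, hpr, hNP, hinj⟩ := exists_prime N X
  haveI : Fact P.Prime := ⟨hpr⟩
  obtain ⟨l, hl⟩ := exists_good P N (by omega) hNP X hX hinj
  obtain ⟨T, hT, hcov⟩ := covering N hN _ hl
  set D : Finset (ZMod N) := (B ×ˢ (Finset.range (K + 1) ×ˢ T)).image
    (fun p => phi P N l p.1 + ((p.2.1 * P : ℕ) : ZMod N) + p.2.2) with hDdef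
  have hDc : D.card ≤ B.card * ((K + 1) * T.card) := by
    refine Finset.card_image_le.trans ?_
    simp
  have hmain := lift_bound U K N (by omega) hpos hK D (by
    intro z
    obtain ⟨t, ht, hz⟩ := hcov z
    rw [Finset.mem_image] at hz
    obtain ⟨x, hx, hxz⟩ := hz
    obtain ⟨r, -, hr⟩ := hB x hx
    refine ⟨phi P N l r, fun u hu => ?_⟩
    obtain ⟨v, rfl⟩ := Int.eq_ofNat_of_zero_le (hpos u hu).le
    obtain ⟨j, hj, hjj⟩ := phi_add P N l x r v K (by exact_mod_cast hK _ hu)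
    rw [hDdef, Finset.mem_image]
    refine ⟨(x + r * v, j, t), ?_, ?_⟩
    · simp only [Finset.mem_product]
      exact ⟨hr _ hu, hj, ht⟩
    · show phi P N l (x + r * v) + ((j * P : ℕ) : ZMod N) + t = _
      rw [← hjj, hxz]; push_cast; ring)
  have h2 : GU U N ≤ B.card * ((K + 1) * T.card) * (K + 2) :=
    hmain.trans (Nat.mul_le_mul_right _ hDc)
  have h3 : (GU U N : ℝ) ≤ B.card * (((K : ℝ) + 1) * T.card) * (K + 2) := by exact_mod_cast h2
  have hlog : 0 ≤ Real.log N := Real.log_natCast_nonneg N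
  calc (GU U N : ℝ) ≤ B.card * (((K : ℝ) + 1) * T.card) * (K + 2) := h3
    _ ≤ B.card * (((K : ℝ) + 1) * (6 * Real.log N)) * (2 * (K + 1)) := by
        gcongr
        have : (0 : ℝ) ≤ K := by positivity
        linarith
    _ = _ := by ring

theorem stmt1 :
    ∃ C : ℝ, 0 < C ∧
      ∀ U : Finset ℤ, ∀ hU : U.Nonempty, (∀ u ∈ U, 0 < u) →
        ∀ N : ℕ, 2 ≤ N →
          G'U U N ≤ GU U N ∧
          (GU U N : ℝ) ≤ C * ((U.max' hU : ℝ) + 1) ^ 2 * Real.log N * G'U U N := by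
  classical
  refine ⟨12, by norm_num, ?_⟩
  intro U hU hpos N hN
  have hne : { m | ∃ B : Finset ℤ, B.card = m ∧
      ∀ x ∈ Finset.Icc (1 : ℤ) (N : ℤ), ∃ r : ℤ, r ≠ 0 ∧ ∀ u ∈ U, x + r * u ∈ B }.Nonempty := by
    refine ⟨_, (Finset.Icc (1 : ℤ) N ×ˢ U).image (fun p => p.1 + 1 * p.2), rfl, ?_⟩
    intro x hx
    refine ⟨1, one_ne_zero, fun u hu => ?_⟩
    exact Finset.mem_image.mpr ⟨(x, u), Finset.mem_product.mpr ⟨hx, hu⟩, rfl⟩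
  have hsub : GU U N ∈ { m | ∃ B : Finset ℤ, B.card = m ∧ ∃ X : Finset ℤ, X.card = N ∧
      ∀ x ∈ X, ∃ r : ℤ, r ≠ 0 ∧ ∀ u ∈ U, x + r * u ∈ B } := by
    obtain ⟨B, hBc, hB⟩ := Nat.sInf_mem hne
    exact ⟨B, hBc, Finset.Icc 1 (N : ℤ), by simp, hB⟩
  refine ⟨Nat.sInf_le hsub, ?_⟩
  obtain ⟨B, hBc, X, hX, hB⟩ := Nat.sInf_mem ⟨_, hsub⟩
  obtain ⟨K, hK⟩ := Int.eq_ofNat_of_zero_le (hpos _ (U.max'_mem hU)).le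
  have h := upper U K N hN hpos (fun u hu => by rw [← hK]; exact U.le_max' u hu) B X hX hB
  rw [hBc] at h
  rw [hK]
  exact_mod_cast h
end

section
/- Let N ≥ 1, let S ⊆ ℤ be a set of N distinct integers, let r : S → ℤ be any function, and let B ⊆ ℤ be a finite set such that {x + 3·r(x), x + 4·r(x), x + 6·r(x)} ⊆ B for every x ∈ S. Then |B| ≥ N^{6/11}. -/
lemma arith1 {v w i c t : ℝ} (hc : 0 ≤ c) (s1 : w ^ 2 ≤ c * t) (s2 : i ^ 2 ≤ c ^ 2)
    (s3 : v ^ 2 ≤ w * i) : v ^ 4 ≤ c ^ 3 * t := by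
  have h0 : 0 ≤ c * t := (sq_nonneg w).trans s1
  calc v ^ 4 = (v ^ 2) ^ 2 := by ring
    _ ≤ (w * i) ^ 2 := pow_le_pow_left₀ (sq_nonneg v) s3 2
    _ = w ^ 2 * i ^ 2 := by ring
    _ ≤ (c * t) * c ^ 2 := mul_le_mul s1 s2 (sq_nonneg i) h0
    _ = _ := by ring

lemma arith2 {s b v t : ℝ} (hb : 0 ≤ b) (hs : 0 ≤ s) (hv : 0 < v) (b1 : s ^ 2 ≤ b * v)
    (b2 : v ^ 4 ≤ (b * b) ^ 3 * t) (b3 : t ≤ v * (b * b)) : s ^ 6 ≤ b ^ 11 := by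
  have b4 : v ^ 3 ≤ b ^ 8 := by
    have : v * v ^ 3 ≤ v * b ^ 8 := by
      calc v * v ^ 3 = v ^ 4 := by ring
        _ ≤ (b * b) ^ 3 * t := b2
        _ ≤ (b * b) ^ 3 * (v * (b * b)) := by gcongr
        _ = _ := by ring
    exact le_of_mul_le_mul_left this hv
  calc s ^ 6 = (s ^ 2) ^ 3 := by ring
    _ ≤ (b * v) ^ 3 := by gcongr
    _ = b ^ 3 * v ^ 3 := by ring
    _ ≤ b ^ 3 * b ^ 8 := by gcongr
    _ = _ := by ring

open Finset in
lemma sum_inv_fiber {α β : Type*} [DecidableEq α] [DecidableEq β] (V : Finset α) (C : Finset β)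
    (f : α → β) (hf : ∀ v ∈ V, f v ∈ C) :
    ∑ v ∈ V, ((#{u ∈ V | f u = f v} : ℕ) : ℝ)⁻¹ ≤ #C := by
  rw [← Finset.sum_fiberwise_of_maps_to hf]
  calc _ ≤ ∑ y ∈ C, (1 : ℝ) := by
        apply Finset.sum_le_sum
        intro y _
        have : ∑ v ∈ V with f v = y, ((#{u ∈ V | f u = f v} : ℕ) : ℝ)⁻¹
            = ∑ v ∈ V with f v = y, ((#{u ∈ V | f u = y} : ℕ) : ℝ)⁻¹ := by
          apply Finset.sum_congr rfl
          intro v hv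
          rw [(Finset.mem_filter.mp hv).2]
        rw [this, Finset.sum_const, nsmul_eq_mul]
        exact mul_inv_le_one
    _ = _ := by simp

open Finset in
lemma chain_card {α β : Type*} [DecidableEq α] [DecidableEq β] (V : Finset α)
    (f g h : α → β) (C : Finset β) (hg : ∀ v ∈ V, g v ∈ C) :
    ((#{t ∈ V ×ˢ V ×ˢ V ×ˢ V | f t.1 = f t.2.1 ∧ g t.2.1 = g t.2.2.1 ∧
      h t.2.2.2 = h t.2.2.1} : ℕ) : ℝ)
    = ∑ y ∈ C, (∑ v ∈ V with g v = y, ((#{u ∈ V | f u = f v} : ℕ) : ℝ)) *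
        (∑ v ∈ V with g v = y, ((#{u ∈ V | h u = h v} : ℕ) : ℝ)) := by
  have e : ∀ y, (∑ v ∈ V with g v = y, ((#{u ∈ V | f u = f v} : ℕ) : ℝ)) *
        (∑ v ∈ V with g v = y, ((#{u ∈ V | h u = h v} : ℕ) : ℝ))
        = ∑ v ∈ V with g v = y, ((#{u ∈ V | f u = f v} : ℕ) : ℝ) *
          ∑ w ∈ V with g w = g v, ((#{u ∈ V | h u = h w} : ℕ) : ℝ) := by
    intro y
    rw [Finset.sum_mul]
    apply Finset.sum_congr rfl
    intro v hv
    rw [(Finset.mem_filter.mp hv).2]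
  rw [Finset.sum_congr rfl (fun y _ => e y), Finset.sum_fiberwise_of_maps_to hg,
    Finset.card_filter]
  push_cast
  simp only [Finset.card_filter, Finset.sum_filter, Finset.sum_product]
  rw [Finset.sum_comm]
  apply Finset.sum_congr rfl
  intro v hv
  push_cast
  rw [Finset.sum_mul]
  apply Finset.sum_congr rfl
  intro u hu
  rw [Finset.mul_sum]
  apply Finset.sum_congr rfl
  intro w hw
  by_cases h1 : f u = f v <;> by_cases h2 : g v = g w <;> simp [h1, h2, eq_comm]

set_option maxHeartbeats 1000000 in
open Finset in
lemma chain_bound {α β : Type*} [DecidableEq α] [DecidableEq β] (V : Finset α)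
    (f g h : α → β) (C : Finset β) (hf : ∀ v ∈ V, f v ∈ C) (hg : ∀ v ∈ V, g v ∈ C)
    (hh : ∀ v ∈ V, h v ∈ C) :
    (#V : ℝ) ^ 4 ≤ (#C : ℝ) ^ 3 *
      ((#{t ∈ V ×ˢ V ×ˢ V ×ˢ V | f t.1 = f t.2.1 ∧ g t.2.1 = g t.2.2.1 ∧
      h t.2.2.2 = h t.2.2.1} : ℕ) : ℝ) := by
  rw [chain_card V f g h C hg]
  set d : α → ℝ := fun v => ((#{u ∈ V | f u = f v} : ℕ) : ℝ) with hd
  set k : α → ℝ := fun v => ((#{u ∈ V | h u = h v} : ℕ) : ℝ) with hk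
  set w : α → ℝ := fun v => √(d v * k v) with hw
  have dpos : ∀ v ∈ V, 0 < d v := by
    intro v hv
    simp only [hd, Nat.cast_pos, Finset.card_pos]
    exact ⟨v, by simp [hv]⟩
  have kpos : ∀ v ∈ V, 0 < k v := by
    intro v hv
    simp only [hk, Nat.cast_pos, Finset.card_pos]
    exact ⟨v, by simp [hv]⟩
  have d0 : ∀ v, 0 ≤ d v := fun v => Nat.cast_nonneg _
  have k0 : ∀ v, 0 ≤ k v := fun v => Nat.cast_nonneg _
  have wpos : ∀ v ∈ V, 0 < w v := fun v hv => Real.sqrt_pos.2 (mul_pos (dpos v hv) (kpos v hv))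
  have wsq : ∀ v, w v ^ 2 = d v * k v := fun v => Real.sq_sqrt (mul_nonneg (d0 v) (k0 v))
  have w0 : ∀ v, 0 ≤ w v := fun v => Real.sqrt_nonneg _
  have s1 : (∑ v ∈ V, w v) ^ 2 ≤ #C * ∑ y ∈ C, (∑ v ∈ V with g v = y, d v) *
        (∑ v ∈ V with g v = y, k v) := by
    rw [← Finset.sum_fiberwise_of_maps_to hg]
    refine sq_sum_le_card_mul_sum_sq.trans ?_
    gcongr with y _
    exact Finset.sum_sq_le_sum_mul_sum_of_sq_eq_mul _ (fun v _ => d0 v) (fun v _ => k0 v)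
      (fun v _ => wsq v)
  have s2 : (∑ v ∈ V, (w v)⁻¹) ^ 2 ≤ (#C : ℝ) ^ 2 := by
    have := Finset.sum_sq_le_sum_mul_sum_of_sq_eq_mul V (r := fun v => (w v)⁻¹)
      (f := fun v => (d v)⁻¹) (g := fun v => (k v)⁻¹) (fun v _ => inv_nonneg.2 (d0 v))
      (fun v _ => inv_nonneg.2 (k0 v)) (fun v _ => by rw [inv_pow, wsq, mul_inv])
    refine this.trans ?_
    rw [pow_two]
    exact mul_le_mul (sum_inv_fiber V C f hf) (sum_inv_fiber V C h hh)
      (Finset.sum_nonneg fun v _ => inv_nonneg.2 (k0 v)) (Nat.cast_nonneg _)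
  have s3 : (#V : ℝ) ^ 2 ≤ (∑ v ∈ V, w v) * (∑ v ∈ V, (w v)⁻¹) := by
    have := Finset.sum_sq_le_sum_mul_sum_of_sq_eq_mul V (r := fun v => (1 : ℝ))
      (f := fun v => w v) (g := fun v => (w v)⁻¹) (fun v _ => w0 v)
      (fun v _ => inv_nonneg.2 (w0 v))
      (fun v hv => by rw [mul_inv_cancel₀ (wpos v hv).ne']; norm_num)
    simpa using this
  exact arith1 (Nat.cast_nonneg _) s1 s2 s3

open Finset in
lemma pair_bound {α β : Type*} [DecidableEq α] [DecidableEq β] (S : Finset α) (C : Finset β)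
    (c : α → β) (hc : ∀ v ∈ S, c v ∈ C) :
    (#S : ℝ) ^ 2 ≤ #C * ((#{t ∈ S ×ˢ S | c t.1 = c t.2} : ℕ) : ℝ) := by
  have e : ((#{t ∈ S ×ˢ S | c t.1 = c t.2} : ℕ) : ℝ)
      = ∑ y ∈ C, ((#{u ∈ S | c u = y} : ℕ) : ℝ) ^ 2 := by
    have : ∀ y ∈ C, ((#{u ∈ S | c u = y} : ℕ) : ℝ) ^ 2
        = ∑ v ∈ S with c v = y, ((#{u ∈ S | c u = c v} : ℕ) : ℝ) := by
      intro y _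
      have : ∑ v ∈ S with c v = y, ((#{u ∈ S | c u = c v} : ℕ) : ℝ)
          = ∑ v ∈ S with c v = y, ((#{u ∈ S | c u = y} : ℕ) : ℝ) := by
        apply Finset.sum_congr rfl
        intro v hv
        rw [(Finset.mem_filter.mp hv).2]
      rw [this, Finset.sum_const, nsmul_eq_mul, pow_two]
    rw [Finset.sum_congr rfl this, Finset.sum_fiberwise_of_maps_to hc, Finset.card_filter]
    push_cast
    simp only [Finset.card_filter, Finset.sum_product]
    push_cast
    rw [Finset.sum_comm]
  rw [e]
  have : (#S : ℝ) = ∑ y ∈ C, ((#{u ∈ S | c u = y} : ℕ) : ℝ) := by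
    rw [Finset.card_eq_sum_card_fiberwise hc]
    push_cast
    rfl
  rw [this]
  exact sq_sum_le_card_mul_sum_sq

set_option maxHeartbeats 1000000 in
open Finset in
lemma main_pow (S : Finset ℤ) (r : ℤ → ℤ) (B : Finset ℤ) (hS : S.Nonempty)
    (hB : ∀ x ∈ S, x + 3 * r x ∈ B ∧ x + 4 * r x ∈ B ∧ x + 6 * r x ∈ B) :
    (#S : ℝ) ^ 6 ≤ (#B : ℝ) ^ 11 := by
  set c : ℤ → ℤ := fun x => x + 4 * r x with hc
  set p : ℤ → ℤ := fun x => x + 3 * r x with hp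
  set q : ℤ → ℤ := fun x => x + 6 * r x with hq
  set V : Finset (ℤ × ℤ) := {t ∈ S ×ˢ S | c t.1 = c t.2} with hV
  have hpq : ∀ x y, p x = p y → q x = q y → x = y := by
    intro x y h1 h2
    simp only [hp, hq] at h1 h2
    linarith
  have b1 : (#S : ℝ) ^ 2 ≤ #B * (#V : ℝ) := pair_bound S B c (fun x hx => (hB x hx).2.1)
  have hVm : ∀ v ∈ V, v.1 ∈ S ∧ v.2 ∈ S ∧ c v.1 = c v.2 := by
    intro v hv
    simpa [hV, and_assoc] using hv
  have b2 := chain_bound V (fun v => (p v.1, p v.2)) (fun v => (q v.1, q v.2))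
    (fun v => (p v.1, q v.2)) (B ×ˢ B)
    (fun v hv => by
      have := hVm v hv
      exact Finset.mem_product.2 ⟨(hB _ this.1).1, (hB _ this.2.1).1⟩)
    (fun v hv => by
      have := hVm v hv
      exact Finset.mem_product.2 ⟨(hB _ this.1).2.2, (hB _ this.2.1).2.2⟩)
    (fun v hv => by
      have := hVm v hv
      exact Finset.mem_product.2 ⟨(hB _ this.1).1, (hB _ this.2.1).2.2⟩)
  set T : Finset ((ℤ × ℤ) × (ℤ × ℤ) × (ℤ × ℤ) × (ℤ × ℤ)) :=
    {t ∈ V ×ˢ V ×ˢ V ×ˢ V | (p t.1.1, p t.1.2) = (p t.2.1.1, p t.2.1.2) ∧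
      (q t.2.1.1, q t.2.1.2) = (q t.2.2.1.1, q t.2.2.1.2) ∧
      (p t.2.2.2.1, q t.2.2.2.2) = (p t.2.2.1.1, q t.2.2.1.2)} with hT
  have b3 : #T ≤ #(V ×ˢ B ×ˢ B) := by
    apply Finset.card_le_card_of_injOn (fun t => (t.1, p t.2.2.2.2, q t.2.2.2.1))
    · rintro ⟨v0, v1, v2, v3⟩ ht
      simp only [hT, Finset.coe_filter, Set.mem_setOf_eq, Finset.mem_product] at ht
      obtain ⟨⟨m0, m1, m2, m3⟩, -⟩ := ht
      have := hVm v3 m3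
      simp only [Finset.coe_product, Set.mem_prod, Finset.mem_coe]
      exact ⟨m0, (hB _ this.2.1).1, (hB _ this.1).2.2⟩
    · rintro ⟨⟨x0, y0⟩, ⟨x1, y1⟩, ⟨x2, y2⟩, ⟨x3, y3⟩⟩ ht
        ⟨⟨X0, Y0⟩, ⟨X1, Y1⟩, ⟨X2, Y2⟩, ⟨X3, Y3⟩⟩ ht' he
      simp only [hT, Finset.coe_filter, Set.mem_setOf_eq, Finset.mem_product,
        Prod.mk.injEq] at ht ht' he
      obtain ⟨⟨m0, m1, m2, m3⟩, ⟨e1, e2⟩, ⟨e3, e4⟩, ⟨e5, e6⟩⟩ := ht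
      obtain ⟨⟨M0, M1, M2, M3⟩, ⟨E1, E2⟩, ⟨E3, E4⟩, ⟨E5, E6⟩⟩ := ht'
      obtain ⟨⟨h0, h0'⟩, h1, h2⟩ := he
      have c1 := (hVm _ m1).2.2
      have c2 := (hVm _ m2).2.2
      have c3 := (hVm _ m3).2.2
      have C1 := (hVm _ M1).2.2
      have C2 := (hVm _ M2).2.2
      have C3 := (hVm _ M3).2.2
      subst h0 h0'
      simp only [hp, hq, hc] at e1 e2 e3 e4 e5 e6 E1 E2 E3 E4 E5 E6 h1 h2 c1 c2 c3 C1 C2 C3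
      have k2 : y2 = Y2 := by linarith
      subst k2
      have k2 : x2 = X2 := by apply hpq <;> simp only [hp, hq] <;> linarith
      subst k2
      have k1 : x1 = X1 := by apply hpq <;> simp only [hp, hq] <;> linarith
      have k1' : y1 = Y1 := by apply hpq <;> simp only [hp, hq] <;> linarith
      have k3 : x3 = X3 := by apply hpq <;> simp only [hp, hq] <;> linarith
      have k3' : y3 = Y3 := by apply hpq <;> simp only [hp, hq] <;> linarith
      subst k1 k1' k3 k3'
      rfl
  have hupper : (#T : ℝ) ≤ #V * (#B * #B) := by
    have : ((#T : ℕ) : ℝ) ≤ (#(V ×ˢ B ×ˢ B) : ℕ) := by exact_mod_cast b3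
    simpa [Finset.card_product] using this
  have Vpos : (0 : ℝ) < #V := by
    obtain ⟨x, hx⟩ := hS
    rw [Nat.cast_pos, Finset.card_pos]
    exact ⟨(x, x), by simp [hV, hx]⟩
  rw [Finset.card_product, Nat.cast_mul] at b2
  exact arith2 (Nat.cast_nonneg _) (Nat.cast_nonneg _) Vpos b1 b2 hupper

/-- If `B ⊆ ℤ` contains the `{3,4,6}`-pattern `{x + 3r(x), x + 4r(x), x + 6r(x)}` for each
of `N` distinct integer basepoints `x`, then `|B| ≥ N^{6/11}`. -/
theorem stmt3 (N : ℕ) (hN : 1 ≤ N) (S : Finset ℤ) (hS : S.card = N)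
    (r : ℤ → ℤ) (B : Finset ℤ)
    (hB : ∀ x ∈ S, x + 3 * r x ∈ B ∧ x + 4 * r x ∈ B ∧ x + 6 * r x ∈ B) :
    (N : ℝ) ^ ((6 : ℝ) / 11) ≤ B.card := by
  have h := main_pow S r B (Finset.card_pos.1 (by omega)) hB
  rw [hS] at h
  refine le_of_pow_le_pow_left₀ (n := 11) (by norm_num) (Nat.cast_nonneg _) ?_
  rw [← Real.rpow_natCast, ← Real.rpow_mul (Nat.cast_nonneg _)]
  norm_num
  exact_mod_cast h
end

section
/- Let p ≥ 2 and q ≥ 1 be integers such that p + 1 divides 2pq. Let N ≥ 1, let S ⊆ ℤ be a set of N distinct integers, let r : S → ℤ be any function, and let B ⊆ ℤ be a finite set such that {x + r(x)·pq, x + r(x)·q, x + r(x)·(2pq/(p+1))} ⊆ B for every x ∈ S. Then |B| ≥ N^{6/11}. -/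
lemma kt_arith1 {x s t u w k W : ℝ} (h1 : x ^ 2 ≤ s * t) (h2 : t ^ 2 ≤ u * w)
    (h3 : s ^ 2 ≤ k * W) : x ^ 4 ≤ u * k * w * W := by
  calc x ^ 4 = (x ^ 2) ^ 2 := by ring
    _ ≤ (s * t) ^ 2 := pow_le_pow_left₀ (sq_nonneg x) h1 2
    _ = s ^ 2 * t ^ 2 := by ring
    _ ≤ (k * W) * (u * w) := mul_le_mul h3 h2 (sq_nonneg t) ((sq_nonneg s).trans h3)
    _ = _ := by ring

lemma kt_arith2 {s n v x y z W : ℝ} (n0 : 0 ≤ n) (v0 : 0 ≤ v) (x0 : 0 ≤ x) (y0 : 0 ≤ y)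
    (z0 : 0 ≤ z) (W0 : 0 ≤ W) (hx : x ≤ n ^ 2) (hy : y ≤ n ^ 2) (hz : z ≤ n ^ 2)
    (hv : v ^ 4 ≤ x * y * z * W) (hW : W ≤ v * n ^ 2) (hs : s ^ 2 ≤ n * v) :
    s ^ 6 ≤ n ^ 11 := by
  have hV4 : v ^ 4 ≤ n ^ 8 * v := by
    calc v ^ 4 ≤ _ := hv
      _ ≤ n ^ 2 * n ^ 2 * n ^ 2 * (v * n ^ 2) := by gcongr
      _ = _ := by ring
  have hV3 : v ^ 3 ≤ n ^ 8 := by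
    rcases v0.eq_or_lt with h0 | h0
    · rw [← h0]; simpa using pow_nonneg n0 8
    · refine le_of_mul_le_mul_right ?_ h0
      calc v ^ 3 * v = v ^ 4 := by ring
        _ ≤ _ := hV4
  calc s ^ 6 = (s ^ 2) ^ 3 := by ring
    _ ≤ (n * v) ^ 3 := by gcongr
    _ = n ^ 3 * v ^ 3 := by ring
    _ ≤ n ^ 3 * n ^ 8 := by gcongr
    _ = n ^ 11 := by ring

open Finset in
lemma kt_sum_inv {α β : Type*} [DecidableEq β] (V : Finset α) (f : α → β) :
    ∑ v ∈ V, (1 : ℝ) / ((V.filter (fun w => f w = f v)).card : ℝ) = ((V.image f).card : ℝ) := by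
  rw [← Finset.sum_fiberwise_of_maps_to (s := V) (t := V.image f) (g := f)
    (fun x hx => Finset.mem_image_of_mem f hx)]
  rw [Finset.card_eq_sum_ones, Nat.cast_sum]
  refine Finset.sum_congr rfl fun z hz => ?_
  obtain ⟨v, hv, rfl⟩ := Finset.mem_image.1 hz
  have h : ∀ x ∈ V.filter (fun w => f w = f v),
      (1 : ℝ) / ((V.filter (fun w => f w = f x)).card : ℝ)
        = 1 / ((V.filter (fun w => f w = f v)).card : ℝ) := by
    intro x hx
    rw [(Finset.mem_filter.1 hx).2]
  rw [Finset.sum_congr rfl h, Finset.sum_const, nsmul_eq_mul]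
  have : ((V.filter (fun w => f w = f v)).card : ℝ) ≠ 0 := by
    have : 0 < (V.filter (fun w => f w = f v)).card :=
      Finset.card_pos.2 ⟨v, Finset.mem_filter.2 ⟨hv, rfl⟩⟩
    positivity
  field_simp
  simp

lemma kt_fiber_pairs {α β : Type*} [DecidableEq β] (V : Finset α) (f : α → β)
    (F G : α → ℝ) :
    ∑ u ∈ (V ×ˢ V).filter (fun u => f u.1 = f u.2), F u.1 * G u.2
      = ∑ z ∈ V.image f, (∑ v ∈ V.filter (fun v => f v = z), F v) *
          (∑ v ∈ V.filter (fun v => f v = z), G v) := by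
  rw [← Finset.sum_fiberwise_of_maps_to (t := V.image f) (g := fun u : α × α => f u.1)
    (fun x hx => Finset.mem_image_of_mem f
      (Finset.mem_product.1 (Finset.mem_filter.1 hx).1).1)]
  refine Finset.sum_congr rfl fun z hz => ?_
  rw [Finset.sum_mul_sum, ← Finset.sum_product']
  refine Finset.sum_congr ?_ fun _ _ => rfl
  ext ⟨x, y⟩
  simp only [Finset.mem_filter, Finset.mem_product]
  constructor
  · rintro ⟨⟨⟨hx, hy⟩, h⟩, h'⟩
    exact ⟨⟨hx, h'⟩, hy, h ▸ h'⟩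
  · rintro ⟨⟨hx, h'⟩, hy, h⟩
    exact ⟨⟨⟨hx, hy⟩, h'.trans h.symm⟩, h'⟩

/-- Lower bound for the number of chains `v₀ ~₁ v₁ ~₂ v₂ ~₃ v₃`. -/
lemma kt_chain {α β₁ β₂ β₃ : Type*} [DecidableEq β₁] [DecidableEq β₂] [DecidableEq β₃]
    (V : Finset α) (f₁ : α → β₁) (f₂ : α → β₂) (f₃ : α → β₃) :
    (V.card : ℝ) ^ 4 ≤ (V.image f₁).card * (V.image f₂).card * (V.image f₃).card *
      ∑ u ∈ (V ×ˢ V).filter (fun u => f₂ u.1 = f₂ u.2),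
        ((V.filter (fun w => f₁ w = f₁ u.1)).card : ℝ) *
          ((V.filter (fun w => f₃ w = f₃ u.2)).card : ℝ) := by
  set c₁ : α → ℝ := fun v => ((V.filter (fun w => f₁ w = f₁ v)).card : ℝ) with hc₁
  set c₃ : α → ℝ := fun v => ((V.filter (fun w => f₃ w = f₃ v)).card : ℝ) with hc₃
  have p₁ : ∀ v ∈ V, 0 < c₁ v := fun v hv => by
    have : 0 < (V.filter (fun w => f₁ w = f₁ v)).card :=
      Finset.card_pos.2 ⟨v, Finset.mem_filter.2 ⟨hv, rfl⟩⟩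
    exact Nat.cast_pos.2 this
  have p₃ : ∀ v ∈ V, 0 < c₃ v := fun v hv => by
    have : 0 < (V.filter (fun w => f₃ w = f₃ v)).card :=
      Finset.card_pos.2 ⟨v, Finset.mem_filter.2 ⟨hv, rfl⟩⟩
    exact Nat.cast_pos.2 this
  have q₁ : ∀ v, 0 ≤ c₁ v := fun v => Nat.cast_nonneg _
  have q₃ : ∀ v, 0 ≤ c₃ v := fun v => Nat.cast_nonneg _
  set g : α → ℝ := fun v => Real.sqrt (c₁ v * c₃ v) with hg
  have g2 : ∀ v, g v ^ 2 = c₁ v * c₃ v := fun v => Real.sq_sqrt (mul_nonneg (q₁ v) (q₃ v))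
  have gp : ∀ v ∈ V, 0 < g v := fun v hv => Real.sqrt_pos.2 (mul_pos (p₁ v hv) (p₃ v hv))
  have g0 : ∀ v, 0 ≤ g v := fun v => Real.sqrt_nonneg _
  rw [kt_fiber_pairs V f₂ c₁ c₃]
  set W := ∑ z ∈ V.image f₂, (∑ v ∈ V.filter (fun v => f₂ v = z), c₁ v) *
          (∑ v ∈ V.filter (fun v => f₂ v = z), c₃ v) with hW
  have h1 : (V.card : ℝ) ^ 2 ≤ (∑ v ∈ V, g v) * ∑ v ∈ V, 1 / g v := by
    have := Finset.sum_sq_le_sum_mul_sum_of_sq_le_mul V (r := fun _ => (1 : ℝ)) (f := g)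
      (g := fun v => 1 / g v) (fun v _ => g0 v) (fun v _ => one_div_nonneg.2 (g0 v))
      (fun v hv => by have := gp v hv; apply le_of_eq; field_simp)
    simpa using this
  have h2 : (∑ v ∈ V, 1 / g v) ^ 2 ≤ (V.image f₁).card * (V.image f₃).card := by
    rw [← kt_sum_inv V f₁, ← kt_sum_inv V f₃]
    refine Finset.sum_sq_le_sum_mul_sum_of_sq_le_mul V (f := fun v => 1 / c₁ v)
      (g := fun v => 1 / c₃ v)
      (fun v _ => one_div_nonneg.2 (q₁ v)) (fun v _ => one_div_nonneg.2 (q₃ v)) ?_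
    intro v hv
    apply le_of_eq
    rw [div_pow, g2]
    have := p₁ v hv
    have := p₃ v hv
    field_simp
  have h3 : (∑ v ∈ V, g v) ^ 2 ≤ (V.image f₂).card * W := by
    rw [← Finset.sum_fiberwise_of_maps_to (s := V) (t := V.image f₂) (g := f₂)
      (fun x hx => Finset.mem_image_of_mem f₂ hx)]
    refine sq_sum_le_card_mul_sum_sq.trans ?_
    refine mul_le_mul_of_nonneg_left ?_ (Nat.cast_nonneg _)
    refine Finset.sum_le_sum fun z _ => ?_
    exact Finset.sum_sq_le_sum_mul_sum_of_sq_le_mul _ (fun v _ => q₁ v) (fun v _ => q₃ v)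
      (fun v _ => (g2 v).le)
  exact kt_arith1 h1 h2 h3

lemma kt_pairs {α β : Type*} [DecidableEq β] (S : Finset α) (f : α → β) :
    (S.card : ℝ) ^ 2 ≤ (S.image f).card *
      (((S ×ˢ S).filter (fun u => f u.1 = f u.2)).card : ℝ) := by
  have h := kt_fiber_pairs S f (fun _ => 1) (fun _ => 1)
  simp only [mul_one, Finset.sum_const, nsmul_eq_mul] at h
  rw [h]
  have h' : (S.card : ℝ) = ∑ z ∈ S.image f, ((S.filter (fun v => f v = z)).card : ℝ) := by
    rw [Finset.card_eq_sum_card_image f S]; push_cast; rfl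
  rw [h']
  refine sq_sum_le_card_mul_sum_sq.trans (le_of_eq ?_)
  simp only [pow_two]

set_option maxHeartbeats 1000000 in
/-- The Katz–Tao sums-differences estimate with exponent `11/6`. -/
lemma kt_main (S B₁ B₂ B₃ : Finset ℤ) (a b : ℤ → ℤ) (n : ℕ)
    (c₁ : B₁.card ≤ n) (c₂ : B₂.card ≤ n) (c₃ : B₃.card ≤ n)
    (h₁ : ∀ x ∈ S, a x ∈ B₁) (h₂ : ∀ x ∈ S, b x ∈ B₂) (h₃ : ∀ x ∈ S, a x + b x ∈ B₃)
    (inj : ∀ x ∈ S, ∀ y ∈ S, a x - b x = a y - b y → x = y) :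
    (S.card : ℝ) ^ 6 ≤ (n : ℝ) ^ 11 := by
  classical
  set V := (S ×ˢ S).filter (fun u => a u.1 = a u.2) with hV
  have memV : ∀ v ∈ V, v.1 ∈ S ∧ v.2 ∈ S ∧ a v.1 = a v.2 := by
    intro v hv
    have := Finset.mem_filter.1 hv
    have h := Finset.mem_product.1 this.1
    exact ⟨h.1, h.2, this.2⟩
  set f₁ : ℤ × ℤ → ℤ × ℤ := fun v => (b v.1, b v.2) with hf₁
  set f₂ : ℤ × ℤ → ℤ × ℤ := fun v => (a v.1 + b v.1, a v.2 + b v.2) with hf₂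
  set f₃ : ℤ × ℤ → ℤ × ℤ := fun v => (b v.1, a v.2 + b v.2) with hf₃
  have hprod : ∀ (P Q : Finset ℤ) (f : ℤ × ℤ → ℤ × ℤ), P.card ≤ n → Q.card ≤ n →
      (∀ v ∈ V, (f v).1 ∈ P ∧ (f v).2 ∈ Q) → ((V.image f).card : ℝ) ≤ (n : ℝ) ^ 2 := by
    intro P Q f hP hQ hf
    have : V.image f ⊆ P ×ˢ Q := by
      intro z hz
      obtain ⟨v, hv, rfl⟩ := Finset.mem_image.1 hz
      exact Finset.mem_product.2 (hf v hv)
    have h := Finset.card_le_card this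
    rw [Finset.card_product] at h
    have : (V.image f).card ≤ n ^ 2 := by
      rw [pow_two]; exact h.trans (Nat.mul_le_mul hP hQ)
    exact_mod_cast this
  have i₁ := hprod B₂ B₂ f₁ c₂ c₂ fun v hv =>
    ⟨h₂ _ (memV v hv).1, h₂ _ (memV v hv).2.1⟩
  have i₂ := hprod B₃ B₃ f₂ c₃ c₃ fun v hv =>
    ⟨h₃ _ (memV v hv).1, h₃ _ (memV v hv).2.1⟩
  have i₃ := hprod B₂ B₃ f₃ c₂ c₃ fun v hv =>
    ⟨h₂ _ (memV v hv).1, h₃ _ (memV v hv).2.1⟩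
  have hchain := kt_chain V f₁ f₂ f₃
  set W := ∑ u ∈ (V ×ˢ V).filter (fun u => f₂ u.1 = f₂ u.2),
        ((V.filter (fun w => f₁ w = f₁ u.1)).card : ℝ) *
          ((V.filter (fun w => f₃ w = f₃ u.2)).card : ℝ) with hW
  have hWle : W ≤ V.card * (n : ℝ) ^ 2 := by
    set Q := ((V ×ˢ V).filter (fun u => f₂ u.1 = f₂ u.2)).sigma
      (fun u => (V.filter (fun w => f₁ w = f₁ u.1)) ×ˢ (V.filter (fun w => f₃ w = f₃ u.2)))
      with hQ
    have hWQ : W = (Q.card : ℝ) := by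
      rw [hQ, Finset.card_sigma]
      push_cast [Finset.card_product]
      rfl
    have hcard : Q.card ≤ (V ×ˢ (B₁ ×ˢ B₂)).card := by
      refine Finset.card_le_card_of_injOn
        (fun t => (t.2.1, (a t.1.2.1, b t.2.2.2))) ?_ ?_
      · rintro ⟨⟨v1, v2⟩, ⟨v0, v3⟩⟩ ht
        simp only [hQ, Finset.mem_coe, Finset.mem_sigma, Finset.mem_filter,
          Finset.mem_product] at ht
        obtain ⟨⟨⟨m1, m2⟩, -⟩, ⟨m0, -⟩, ⟨m3, -⟩⟩ := ht
        simp only [Finset.mem_coe, Finset.mem_product]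
        exact ⟨m0, h₁ _ (memV v2 m2).1, h₂ _ (memV v3 m3).2.1⟩
      · rintro ⟨⟨v1, v2⟩, ⟨v0, v3⟩⟩ ht ⟨⟨w1, w2⟩, ⟨w0, w3⟩⟩ hs heq
        simp only [hQ, Finset.mem_coe, Finset.mem_sigma, Finset.mem_filter,
          Finset.mem_product, hf₁, hf₂, hf₃, Prod.mk.injEq] at ht hs heq
        obtain ⟨⟨⟨m1, m2⟩, e1, e2⟩, ⟨m0, e3, e4⟩, ⟨m3, e5, e6⟩⟩ := ht
        obtain ⟨⟨⟨k1, k2⟩, d1, d2⟩, ⟨k0, d3, d4⟩, ⟨k3, d5, d6⟩⟩ := hs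
        obtain ⟨rfl, q1, q2⟩ := heq
        obtain ⟨M1, M1', A1⟩ := memV _ m1
        obtain ⟨M2, M2', A2⟩ := memV _ m2
        obtain ⟨M3, M3', A3⟩ := memV _ m3
        obtain ⟨K1, K1', C1⟩ := memV _ k1
        obtain ⟨K2, K2', C2⟩ := memV _ k2
        obtain ⟨K3, K3', C3⟩ := memV _ k3
        have r31 : v3.1 = w3.1 := inj _ M3 _ K3 (by linarith)
        have ra3 := congrArg a r31
        have rb3 := congrArg b r31
        have r32 : v3.2 = w3.2 := inj _ M3' _ K3' (by linarith)
        have r21 : v2.1 = w2.1 := inj _ M2 _ K2 (by linarith)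
        have rb32 := congrArg b r32
        have ra32 := congrArg a r32
        have r22 : v2.2 = w2.2 := inj _ M2' _ K2' (by linarith)
        have ra2 := congrArg a r21
        have rb2 := congrArg b r21
        have ra22 := congrArg a r22
        have rb22 := congrArg b r22
        have r11 : v1.1 = w1.1 := inj _ M1 _ K1 (by linarith)
        have r12 : v1.2 = w1.2 := inj _ M1' _ K1' (by linarith)
        obtain rfl : v1 = w1 := Prod.ext r11 r12
        obtain rfl : v2 = w2 := Prod.ext r21 r22
        obtain rfl : v3 = w3 := Prod.ext r31 r32
        rfl
    rw [Finset.card_product, Finset.card_product] at hcard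
    have : Q.card ≤ V.card * n ^ 2 := by
      rw [pow_two]
      exact hcard.trans (Nat.mul_le_mul le_rfl (Nat.mul_le_mul c₁ c₂))
    rw [hWQ]
    exact_mod_cast this
  have hpairs : (S.card : ℝ) ^ 2 ≤ n * V.card := by
    refine (kt_pairs S a).trans ?_
    have : (S.image a).card ≤ n := by
      refine (Finset.card_le_card ?_).trans c₁
      intro z hz
      obtain ⟨x, hx, rfl⟩ := Finset.mem_image.1 hz
      exact h₁ x hx
    have : ((S.image a).card : ℝ) ≤ n := by exact_mod_cast this
    gcongr
  have hW0 : 0 ≤ W := Finset.sum_nonneg fun _ _ => mul_nonneg (Nat.cast_nonneg _) (Nat.cast_nonneg _)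
  exact kt_arith2 (Nat.cast_nonneg _) (Nat.cast_nonneg _) (Nat.cast_nonneg _)
    (Nat.cast_nonneg _) (Nat.cast_nonneg _) hW0 i₁ i₂ i₃ hchain hWle hpairs

/-- Let `p ≥ 2`, `q ≥ 1` be integers with `(p+1) ∣ 2pq`. If `B ⊆ ℤ` contains the pattern
`{x + r(x)·pq, x + r(x)·q, x + r(x)·(2pq/(p+1))}` for each of `N` distinct integer
basepoints `x`, then `|B| ≥ N^{6/11}`. -/
theorem stmt4 (p q : ℤ) (hp : 2 ≤ p) (hq : 1 ≤ q) (hdvd : (p + 1) ∣ 2 * p * q)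
    (N : ℕ) (hN : 1 ≤ N) (S : Finset ℤ) (hS : S.card = N)
    (r : ℤ → ℤ) (B : Finset ℤ)
    (hB : ∀ x ∈ S, x + r x * (p * q) ∈ B ∧ x + r x * q ∈ B ∧
      x + r x * (2 * p * q / (p + 1)) ∈ B) :
    (N : ℝ) ^ ((6 : ℝ) / 11) ≤ B.card := by
  obtain ⟨m, hm⟩ := hdvd
  have hp1 : p + 1 ≠ 0 := by omega
  have hdiv : 2 * p * q / (p + 1) = m := by
    rw [hm]; exact Int.mul_ediv_cancel_left m hp1
  rw [hdiv] at hB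
  have key := kt_main S B (B.image (fun y => p * y)) (B.image (fun y => (p + 1) * y))
    (fun x => x + r x * (p * q)) (fun x => p * (x + r x * q)) B.card le_rfl
    Finset.card_image_le Finset.card_image_le
    (fun x hx => (hB x hx).1)
    (fun x hx => Finset.mem_image_of_mem _ (hB x hx).2.1)
    (fun x hx => Finset.mem_image.2 ⟨_, (hB x hx).2.2, by linear_combination (-(r x)) * hm⟩)
    (fun x _ y _ h => by
      have h' : (p - 1) * (x - y) = 0 := by linear_combination -h
      rcases mul_eq_zero.1 h' with h0 | h0 <;> omega)
  rw [hS] at key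
  have e : ((N : ℝ) ^ ((6 : ℝ) / 11)) ^ 11 = (N : ℝ) ^ 6 := by
    rw [← Real.rpow_natCast, ← Real.rpow_mul (Nat.cast_nonneg _), ← Real.rpow_natCast]
    norm_num
  refine le_of_pow_le_pow_left₀ (n := 11) (by norm_num) (Nat.cast_nonneg _) ?_
  rw [e]
  exact key
end

section
/- For every integer n ≥ 1 and every nonempty finite set P ⊂ ℝ, one has f_n^M(P) = f_n^P(P). That is, the infimum of the Minkowski dimension over bounded sets B ⊆ ℝ^n that contain a P-pattern for every scaling factor r ∈ [0,1]^n equals the infimum of the packing dimension over (arbitrary) sets B ⊆ ℝ^n with the same property. -/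
open Set Filter Bornology

/-- Covering number of `E` by open balls of radius `ε`. -/
noncomputable def covNum {X : Type*} [PseudoMetricSpace X] (E : Set X) (ε : ℝ) : ℕ∞ :=
  ⨅ (t : Finset X) (_ : E ⊆ ⋃ x ∈ t, Metric.ball x ε), (t.card : ℕ∞)

/-- Upper Minkowski (box-counting) dimension. -/
noncomputable def dimM {X : Type*} [PseudoMetricSpace X] (E : Set X) : ℝ :=
  limsup (fun ε : ℝ => Real.log ((covNum E ε).toNat) / Real.log (1 / ε))
    (nhdsWithin 0 (Ioi 0))

/-- Packing dimension, as modified upper box dimension: the infimum of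
`⨆ j, dimM (E j)` over countable covers of the set by bounded sets. -/
noncomputable def dimP {X : Type*} [PseudoMetricSpace X] (E : Set X) : ℝ :=
  sInf { a : ℝ | ∃ f : ℕ → Set X, (E ⊆ ⋃ j, f j) ∧ (∀ j, IsBounded (f j)) ∧
    a = ⨆ j, dimM (f j) }

/-- Covering bound with exponent `a`. -/
def QCov {X : Type*} [PseudoMetricSpace X] (a : ℝ) (E : Set X) : Prop :=
  ∃ K : ℝ, 0 < K ∧ ∀ ε : ℝ, 0 < ε → ε < 1 → ∃ t : Finset X,
    (t.card : ℝ) ≤ K * ε⁻¹ ^ a ∧ E ⊆ ⋃ x ∈ t, Metric.ball x ε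

lemma covNum_le_card {X : Type*} [PseudoMetricSpace X] {E : Set X} {ε : ℝ} (t : Finset X)
    (h : E ⊆ ⋃ x ∈ t, Metric.ball x ε) : covNum E ε ≤ t.card :=
  iInf₂_le t h

lemma covNum_attained {X : Type*} [PseudoMetricSpace X] {E : Set X} {ε : ℝ} (t : Finset X)
    (h : E ⊆ ⋃ x ∈ t, Metric.ball x ε) : ∃ s : Finset X, E ⊆ (⋃ x ∈ s, Metric.ball x ε) ∧
      s.card = (covNum E ε).toNat := by
  classical
  have hex : ∃ k : ℕ, ∃ s : Finset X, E ⊆ (⋃ x ∈ s, Metric.ball x ε) ∧ s.card = k := ⟨_, t, h, rfl⟩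
  obtain ⟨s, hs, hc⟩ := Nat.find_spec hex
  refine ⟨s, hs, ?_⟩
  have : covNum E ε = (s.card : ℕ∞) := by
    apply le_antisymm (covNum_le_card s hs)
    refine le_iInf₂ fun u hu => ?_
    rw [hc]
    exact_mod_cast Nat.find_min' hex ⟨u, hu, rfl⟩
  rw [this]; simp

lemma toNat_covNum_le {X : Type*} [PseudoMetricSpace X] {E : Set X} {ε : ℝ} (t : Finset X)
    (h : E ⊆ ⋃ x ∈ t, Metric.ball x ε) : (covNum E ε).toNat ≤ t.card := by
  have := ENat.toNat_le_toNat (covNum_le_card t h) (by simp)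
  simpa using this

lemma QCov.mono {X : Type*} [PseudoMetricSpace X] {a : ℝ} {E F : Set X} (h : QCov a E)
    (hs : F ⊆ E) : QCov a F := by
  obtain ⟨K, hK, H⟩ := h
  refine ⟨K, hK, fun ε h0 h1 => ?_⟩
  obtain ⟨t, h1, h2⟩ := H ε h0 h1
  exact ⟨t, h1, hs.trans h2⟩

lemma QCov.empty {X : Type*} [PseudoMetricSpace X] {a : ℝ} : QCov a (∅ : Set X) :=
  ⟨1, one_pos, fun ε h0 _ => ⟨∅, by simp; positivity, by simp⟩⟩

lemma QCov.union {X : Type*} [PseudoMetricSpace X] {a : ℝ} {E F : Set X} (h : QCov a E)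
    (h' : QCov a F) : QCov a (E ∪ F) := by
  classical
  obtain ⟨K, hK, H⟩ := h
  obtain ⟨L, hL, H'⟩ := h'
  refine ⟨K + L, by positivity, fun ε h0 h1 => ?_⟩
  obtain ⟨t, h3, h4⟩ := H ε h0 h1
  obtain ⟨s, h5, h6⟩ := H' ε h0 h1
  refine ⟨t ∪ s, ?_, ?_⟩
  · have : ((t ∪ s).card : ℝ) ≤ t.card + s.card := by exact_mod_cast Finset.card_union_le t s
    rw [add_mul]; linarith
  · rw [Finset.set_biUnion_union]
    exact union_subset_union h4 h6

lemma QCov.biUnion {X ι : Type*} [PseudoMetricSpace X] {a : ℝ} (s : Finset ι) (f : ι → Set X)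
    (h : ∀ i ∈ s, QCov a (f i)) : QCov a (⋃ i ∈ s, f i) := by
  classical
  induction s using Finset.induction_on with
  | empty => simpa using QCov.empty
  | insert i s hi ih =>
    rw [Finset.set_biUnion_insert]
    exact (h i (by simp)).union (ih fun j hj => h j (by simp [hj]))

lemma QCov.image {X Y : Type*} [PseudoMetricSpace X] [PseudoMetricSpace Y] {a : ℝ} {E : Set X}
    (h : QCov a E) (f : X → Y) (L : ℝ) (hL : 1 ≤ L) (hf : ∀ x y, dist (f x) (f y) ≤ L * dist x y) :
    QCov a (f '' E) := by
  classical
  obtain ⟨K, hK, H⟩ := h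
  have hL0 : 0 < L := by linarith
  refine ⟨K * L ^ a, by positivity, fun ε h0 h1 => ?_⟩
  obtain ⟨t, h3, h4⟩ := H (ε / L) (by positivity) (by rw [div_lt_one hL0]; linarith)
  refine ⟨t.image f, ?_, ?_⟩
  · have : ((t.image f).card : ℝ) ≤ t.card := by exact_mod_cast Finset.card_image_le
    have e : (ε / L)⁻¹ = L * ε⁻¹ := by field_simp
    rw [e, Real.mul_rpow hL0.le (by positivity)] at h3
    linarith [mul_assoc K (L ^ a) (ε⁻¹ ^ a)]
  · rintro _ ⟨x, hx, rfl⟩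
    obtain ⟨y, hy, hxy⟩ := mem_iUnion₂.1 (h4 hx)
    refine mem_iUnion₂.2 ⟨f y, Finset.mem_image_of_mem f hy, ?_⟩
    rw [Metric.mem_ball] at *
    rw [lt_div_iff₀ hL0] at hxy
    linarith [hf x y]

lemma QCov.closure {X : Type*} [PseudoMetricSpace X] {a : ℝ} {E : Set X} (h : QCov a E) :
    QCov a (closure E) := by
  obtain ⟨K, hK, H⟩ := h
  refine ⟨K * 2 ^ a, by positivity, fun ε h0 h1 => ?_⟩
  obtain ⟨t, h3, h4⟩ := H (ε / 2) (by positivity) (by linarith)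
  refine ⟨t, ?_, ?_⟩
  · have e : (ε / 2)⁻¹ = 2 * ε⁻¹ := by field_simp
    rw [e, Real.mul_rpow (by norm_num) (by positivity)] at h3
    linarith [mul_assoc K (2 ^ a) (ε⁻¹ ^ a)]
  · intro x hx
    obtain ⟨z, hz, hxz⟩ := Metric.mem_closure_iff.1 hx (ε / 2) (by positivity)
    obtain ⟨y, hy, hzy⟩ := mem_iUnion₂.1 (h4 hz)
    refine mem_iUnion₂.2 ⟨y, hy, ?_⟩
    rw [Metric.mem_ball] at *
    linarith [dist_triangle x z y]

lemma ratio_nonneg {X : Type*} [PseudoMetricSpace X] (E : Set X) :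
    ∀ᶠ ε : ℝ in nhdsWithin 0 (Ioi 0),
      0 ≤ Real.log ((covNum E ε).toNat) / Real.log (1 / ε) := by
  filter_upwards [Ioo_mem_nhdsGT (zero_lt_one' ℝ)] with ε hε
  apply div_nonneg (Real.log_natCast_nonneg _)
  apply Real.log_nonneg
  rw [one_div]; exact (one_le_inv₀ hε.1).2 hε.2.le

lemma QCov.eventually_le {X : Type*} [PseudoMetricSpace X] {a b : ℝ} {E : Set X} (h : QCov a E)
    (ha : 0 ≤ a) (hab : a < b) : ∀ᶠ ε : ℝ in nhdsWithin 0 (Ioi 0),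
      Real.log ((covNum E ε).toNat) / Real.log (1 / ε) ≤ b := by
  obtain ⟨K, hK, H⟩ := h
  have ht : Tendsto (fun ε : ℝ => Real.log (1 / ε)) (nhdsWithin 0 (Ioi 0)) atTop := by
    simp only [one_div]
    exact Real.tendsto_log_atTop.comp tendsto_inv_nhdsGT_zero
  filter_upwards [Ioo_mem_nhdsGT (zero_lt_one' ℝ), ht.eventually_ge_atTop (Real.log K / (b - a)),
    ht.eventually_gt_atTop 0] with ε hε h1 h2
  rw [div_le_iff₀ h2]
  rw [div_le_iff₀ (by linarith)] at h1
  obtain ⟨t, h3, h4⟩ := H ε hε.1 hε.2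
  have h5 : ((covNum E ε).toNat : ℝ) ≤ t.card := by exact_mod_cast toNat_covNum_le t h4
  rcases Nat.eq_zero_or_pos (covNum E ε).toNat with h0 | h0
  · rw [h0]; simp only [Nat.cast_zero, Real.log_zero]; 
    have : 0 ≤ b := by linarith
    positivity
  · have hε0 := hε.1
    have := Real.log_le_log (by exact_mod_cast h0) (h5.trans h3)
    rw [Real.log_mul hK.ne' (by positivity), Real.log_rpow (by positivity)] at this
    rw [one_div] at *
    nlinarith

lemma dimM_isCobdd {X : Type*} [PseudoMetricSpace X] (E : Set X) :
    IsCoboundedUnder (· ≤ ·) (nhdsWithin (0:ℝ) (Ioi 0))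
      (fun ε : ℝ => Real.log ((covNum E ε).toNat) / Real.log (1 / ε)) :=
  IsBoundedUnder.isCoboundedUnder_le (isBoundedUnder_of_eventually_ge (ratio_nonneg E))

lemma QCov.dimM_le {X : Type*} [PseudoMetricSpace X] {a : ℝ} {E : Set X} (h : QCov a E)
    (ha : 0 ≤ a) : dimM E ≤ a := by
  apply le_of_forall_gt_imp_ge_of_dense
  intro b hb
  exact limsup_le_of_le (dimM_isCobdd E) (h.eventually_le ha hb)

lemma QCov.dimM_nonneg {X : Type*} [PseudoMetricSpace X] {a : ℝ} {E : Set X} (h : QCov a E)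
    (ha : 0 ≤ a) : 0 ≤ dimM E :=
  le_limsup_of_frequently_le (ratio_nonneg E).frequently
    (isBoundedUnder_of_eventually_le (h.eventually_le ha (lt_add_one a)))

lemma QCov.of_dimM_lt {X : Type*} [PseudoMetricSpace X] {a c : ℝ} {E : Set X} (h : QCov c E)
    (hc : 0 ≤ c) (ha : dimM E < a) : QCov a E := by
  have ha0 : 0 < a := (h.dimM_nonneg hc).trans_lt ha
  have hev := eventually_lt_of_limsup_lt ha
    (isBoundedUnder_of_eventually_le (h.eventually_le hc (lt_add_one c)))
  obtain ⟨δ, hδ, hsub⟩ := mem_nhdsGT_iff_exists_Ioo_subset.1 hev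
  have hδ : 0 < δ := hδ
  obtain ⟨L, hL, H⟩ := h
  set η := min δ 1 / 2 with hη
  have hη0 : 0 < η := by positivity
  have hη1 : η < 1 := by have := min_le_right δ 1; linarith
  have hηδ : η < δ := by
    have := min_le_left δ 1
    linarith
  obtain ⟨s, -, hs⟩ := H η hη0 hη1
  refine ⟨s.card + 1, by positivity, fun ε h0 h1 => ?_⟩
  have hpow : 1 ≤ ε⁻¹ ^ a := Real.one_le_rpow ((one_le_inv₀ h0).2 h1.le) ha0.le
  rcases lt_or_ge ε δ with hlt | hge
  · obtain ⟨t, -, ht⟩ := H ε h0 h1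
    obtain ⟨u, hu, hcard⟩ := covNum_attained t ht
    refine ⟨u, ?_, hu⟩
    have h2 : Real.log ((covNum E ε).toNat) / Real.log (1 / ε) < a := hsub ⟨h0, hlt⟩
    have hlog : 0 < Real.log (1 / ε) := Real.log_pos (by rw [one_div]; exact (one_lt_inv₀ h0).2 h1)
    rw [div_lt_iff₀ hlog, ← hcard] at h2
    have h3 : (u.card : ℝ) ≤ ε⁻¹ ^ a := by
      rcases Nat.eq_zero_or_pos u.card with h4 | h4
      · rw [h4]; push_cast; positivity
      · have h4' : (0:ℝ) < u.card := by exact_mod_cast h4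
        rw [← Real.log_le_log_iff h4' (by positivity), Real.log_rpow (by positivity), ← one_div]
        exact h2.le
    have : (0:ℝ) ≤ s.card := by positivity
    nlinarith
  · refine ⟨s, ?_, hs.trans ?_⟩
    · have : (0:ℝ) ≤ s.card := by positivity
      nlinarith
    · exact iUnion₂_mono fun x _ => Metric.ball_subset_ball (by linarith)

lemma coord_le_norm {n : ℕ} (x : EuclideanSpace ℝ (Fin n)) (i : Fin n) : |x i| ≤ ‖x‖ := by
  simpa using PiLp.norm_apply_le x i

lemma norm_le_of_coord {n : ℕ} (x : EuclideanSpace ℝ (Fin n)) (c : ℝ) (hc : 0 ≤ c)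
    (h : ∀ i, |x i| ≤ c) : ‖x‖ ≤ n * c := by
  rw [EuclideanSpace.norm_eq]
  apply Real.sqrt_le_iff.2 ⟨by positivity, ?_⟩
  calc ∑ i, ‖x i‖ ^ 2 ≤ ∑ _i : Fin n, c ^ 2 := by
        apply Finset.sum_le_sum
        intro i _
        exact pow_le_pow_left₀ (norm_nonneg _) (h i) 2
    _ = n * c ^ 2 := by simp
    _ ≤ (n * c) ^ 2 := by
        rw [mul_pow]
        apply mul_le_mul_of_nonneg_right _ (by positivity)
        exact_mod_cast Nat.le_self_pow two_ne_zero n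

lemma QCov.of_bounded {n : ℕ} {E : Set (EuclideanSpace ℝ (Fin n))} (hE : IsBounded E) :
    QCov (n : ℝ) E := by
  classical
  obtain ⟨R, hR0, hR⟩ := hE.exists_pos_norm_le
  set m : ℝ := n + 1 with hm
  have hm0 : 0 < m := by positivity
  refine ⟨(2 * R * m + 5) ^ n, by positivity, fun ε h0 h1 => ?_⟩
  set η := ε / m with hη
  have hη0 : 0 < η := by positivity
  set M : ℕ := ⌈R / η⌉₊ + 1 with hM
  let g : (Fin n → ℤ) → EuclideanSpace ℝ (Fin n) := fun z => WithLp.toLp 2 fun i => η * z i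
  refine ⟨(Fintype.piFinset fun _ : Fin n => Finset.Icc (-(M : ℤ)) M).image g, ?_, ?_⟩
  · have hc : (((Fintype.piFinset fun _ : Fin n => Finset.Icc (-(M : ℤ)) M).image g).card : ℝ) ≤
        (2 * M + 1) ^ n := by
      have h2 := Finset.card_image_le (s := Fintype.piFinset fun _ : Fin n => Finset.Icc (-(M : ℤ)) M)
        (f := g)
      rw [Fintype.card_piFinset] at h2
      simp only [Int.card_Icc, Finset.prod_const, Finset.card_univ, Fintype.card_fin] at h2
      have e : ((M : ℤ) + 1 - -(M : ℤ)).toNat = 2 * M + 1 := by omega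
      rw [e] at h2
      exact_mod_cast h2
    refine hc.trans ?_
    rw [Real.rpow_natCast, ← mul_pow]
    apply pow_le_pow_left₀ (by positivity)
    have h3 : (M : ℝ) < R / η + 1 + 1 := by
      rw [hM]; push_cast
      linarith [Nat.ceil_lt_add_one (show 0 ≤ R / η by positivity)]
    have h4 : R / η = R * m * ε⁻¹ := by rw [hη]; field_simp
    have h5 : 1 ≤ ε⁻¹ := (one_le_inv₀ h0).2 h1.le
    rw [h4] at h3
    nlinarith
  · intro x hx
    let z : Fin n → ℤ := fun i => ⌊x i / η⌋
    refine mem_iUnion₂.2 ⟨g z, Finset.mem_image_of_mem g ?_, ?_⟩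
    · rw [Fintype.mem_piFinset]
      intro i
      have hx1 := (coord_le_norm x i).trans (hR x hx)
      have hx2 := abs_le.1 hx1
      have hR1 : R / η ≤ ⌈R / η⌉₊ := Nat.le_ceil _
      have h6 : x i / η ≤ R / η := by gcongr; exact hx2.2
      have h7 : -(R / η) ≤ x i / η := by rw [← neg_div]; gcongr; exact hx2.1
      rw [Finset.mem_Icc]
      constructor
      · apply Int.le_floor.2
        rw [hM]; push_cast; linarith
      · have : (⌊x i / η⌋ : ℝ) ≤ (M : ℤ) := by
          refine (Int.floor_le _).trans ?_
          rw [hM]; push_cast; linarith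
        exact_mod_cast this
    · rw [Metric.mem_ball, dist_eq_norm]
      have := norm_le_of_coord (x - g z) η hη0.le (fun i => by
        have e : (x - g z) i = η * Int.fract (x i / η) := by
          simp only [PiLp.sub_apply, g, z, Int.fract]
          field_simp
        rw [e, abs_of_nonneg (mul_nonneg hη0.le (Int.fract_nonneg _))]
        nlinarith [Int.fract_lt_one (x i / η)])
      have : ε = m * η := by rw [hη]; field_simp
      nlinarith

lemma dimM_nonneg' {n : ℕ} {E : Set (EuclideanSpace ℝ (Fin n))} (hE : IsBounded E) :
    0 ≤ dimM E := (QCov.of_bounded hE).dimM_nonneg (by positivity)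

lemma dimP_nonneg' {n : ℕ} (E : Set (EuclideanSpace ℝ (Fin n))) : 0 ≤ dimP E := by
  apply Real.sInf_nonneg
  rintro a ⟨f, -, hb, rfl⟩
  exact Real.iSup_nonneg fun j => dimM_nonneg' (hb j)

lemma dimP_le_dimM {n : ℕ} {E : Set (EuclideanSpace ℝ (Fin n))} (hE : IsBounded E) :
    dimP E ≤ dimM E := by
  apply csInf_le
  · refine ⟨0, ?_⟩
    rintro a ⟨f, -, hb, rfl⟩
    exact Real.iSup_nonneg fun j => dimM_nonneg' (hb j)
  · exact ⟨fun _ => E, by rw [iUnion_const], fun _ => hE, by simp⟩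

lemma exists_cover_of_dimP_lt {n : ℕ} {E : Set (EuclideanSpace ℝ (Fin n))} {a : ℝ}
    (h : dimP E < a) : ∃ f : ℕ → Set (EuclideanSpace ℝ (Fin n)), (E ⊆ ⋃ j, f j) ∧
      (∀ j, IsBounded (f j)) ∧ ∀ j, QCov a (f j) := by
  have hne : { a : ℝ | ∃ f : ℕ → Set (EuclideanSpace ℝ (Fin n)), (E ⊆ ⋃ j, f j) ∧
      (∀ j, IsBounded (f j)) ∧ a = ⨆ j, dimM (f j) }.Nonempty := by
    refine ⟨_, fun j => Metric.ball 0 j, ?_, fun j => Metric.isBounded_ball, rfl⟩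
    rw [Metric.iUnion_ball_nat]; exact subset_univ _
  obtain ⟨b, ⟨f, h1, h2, rfl⟩, hb⟩ := exists_lt_of_csInf_lt hne h
  refine ⟨f, h1, h2, fun j => (QCov.of_bounded (h2 j)).of_dimM_lt (by positivity) ?_⟩
  refine (le_ciSup (f := fun j => dimM (f j)) ⟨n, ?_⟩ j).trans_lt hb
  rintro _ ⟨j, rfl⟩
  exact (QCov.of_bounded (h2 j)).dimM_le (by positivity)

lemma isClosed_scalings {V : Type*} [NormedAddCommGroup V] [NormedSpace ℝ V] (P : Finset ℝ)
    (hP : P.Nonempty) {K : Set V} (hK : IsCompact K) :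
    IsClosed {r : V | ∃ x : V, ∀ p ∈ P, x + p • r ∈ K} := by
  obtain ⟨q, hq⟩ := hP
  have : CompactSpace K := isCompact_iff_compactSpace.1 hK
  have hC : IsClosed {w : V × K | ∀ p ∈ P, (w.2 : V) + (p - q) • w.1 ∈ K} := by
    simp only [ofPred_forall]
    refine isClosed_biInter fun p _ => hK.isClosed.preimage ?_
    fun_prop
  convert isClosedMap_fst_of_compactSpace _ hC using 1
  ext r
  constructor
  · rintro ⟨x, hx⟩
    refine ⟨(r, ⟨x + q • r, hx q hq⟩), fun p hp => ?_, rfl⟩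
    have : x + q • r + (p - q) • r = x + p • r := by module
    simpa [this] using hx p hp
  · rintro ⟨⟨r', y⟩, hw, rfl⟩
    refine ⟨y - q • r', fun p hp => ?_⟩
    have : (y : V) - q • r' + p • r' = y + (p - q) • r' := by module
    rw [this]; exact hw p hp

lemma cube_norm_le {n : ℕ} (r : EuclideanSpace ℝ (Fin n)) (h : ∀ i, r i ∈ Icc (0:ℝ) 1) :
    ‖r‖ ≤ n := by
  have := norm_le_of_coord r 1 zero_le_one fun i => by rw [abs_of_nonneg (h i).1]; exact (h i).2
  simpa using this

lemma exists_bounded_pattern (n : ℕ) (P : Finset ℝ) :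
    ∃ B : Set (EuclideanSpace ℝ (Fin n)), IsBounded B ∧
        (∀ r : EuclideanSpace ℝ (Fin n), (∀ i, r i ∈ Icc (0 : ℝ) 1) →
          ∃ x : EuclideanSpace ℝ (Fin n), ∀ p ∈ P, x + p • r ∈ B) := by
  refine ⟨Metric.closedBall 0 ((∑ p ∈ P, |p|) * n), Metric.isBounded_closedBall, fun r hr =>
    ⟨0, fun p hp => ?_⟩⟩
  rw [zero_add, mem_closedBall_zero_iff, norm_smul, Real.norm_eq_abs]
  have h1 : |p| ≤ ∑ p ∈ P, |p| :=
    Finset.single_le_sum (f := fun p : ℝ => |p|) (fun _ _ => abs_nonneg _) hp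
  have := cube_norm_le r hr
  gcongr

lemma main_construction (n : ℕ) (P : Finset ℝ) (hP : P.Nonempty)
    (B : Set (EuclideanSpace ℝ (Fin n)))
    (hB : ∀ r : EuclideanSpace ℝ (Fin n), (∀ i, r i ∈ Icc (0 : ℝ) 1) →
          ∃ x : EuclideanSpace ℝ (Fin n), ∀ p ∈ P, x + p • r ∈ B) {a : ℝ} (ha : dimP B < a) :
    ∃ B' : Set (EuclideanSpace ℝ (Fin n)), IsBounded B' ∧
        (∀ r : EuclideanSpace ℝ (Fin n), (∀ i, r i ∈ Icc (0 : ℝ) 1) →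
          ∃ x : EuclideanSpace ℝ (Fin n), ∀ p ∈ P, x + p • r ∈ B') ∧ QCov a B' := by
  classical
  obtain ⟨f, hcov, hbd, hQ⟩ := exists_cover_of_dimP_lt ha
  let E : ℕ → Set (EuclideanSpace ℝ (Fin n)) := fun j => closure (⋃ i ∈ Finset.range (j + 1), f i)
  have hEb : ∀ j, IsBounded (⋃ i ∈ Finset.range (j + 1), f i) := fun j =>
    (isBounded_biUnion_finset _).2 fun i _ => hbd i
  have hEc : ∀ j, IsCompact (E j) := fun j => (hEb j).isCompact_closure
  have hEQ : ∀ j, QCov a (E j) := fun j => (QCov.biUnion _ f fun i _ => hQ i).closure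
  let O : Set (EuclideanSpace ℝ (Fin n)) := {r | ∀ i, r i ∈ Ioo (0:ℝ) 1}
  have hO : IsOpen O := by
    have : O = ⋂ i, {r : EuclideanSpace ℝ (Fin n) | r i ∈ Ioo (0:ℝ) 1} := by
      ext r; simp [O]
    rw [this]
    exact isOpen_iInter_of_finite fun i => isOpen_Ioo.preimage (by fun_prop)
  have hOne : O.Nonempty := ⟨WithLp.toLp 2 fun _ => 1 / 2, fun i => by norm_num⟩
  let F : ℕ → Set (EuclideanSpace ℝ (Fin n)) := fun j =>
    {r | ∃ x, ∀ p ∈ P, x + p • r ∈ E j} ∪ Oᶜ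
  have hFc : ∀ j, IsClosed (F j) := fun j =>
    (isClosed_scalings P hP (hEc j)).union hO.isClosed_compl
  have hFU : ⋃ j, F j = univ := by
    rw [eq_univ_iff_forall]
    intro r
    by_cases hr : r ∈ O
    · obtain ⟨x, hx⟩ := hB r fun i => Ioo_subset_Icc_self (hr i)
      have h1 : ∀ p : ℝ, ∃ j, p ∈ P → x + p • r ∈ f j := by
        intro p
        by_cases hp : p ∈ P
        · obtain ⟨j, hj⟩ := mem_iUnion.1 (hcov (hx p hp))
          exact ⟨j, fun _ => hj⟩
        · exact ⟨0, fun h => absurd h hp⟩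
      choose J hJ using h1
      refine mem_iUnion.2 ⟨P.sup J, Or.inl ⟨x, fun p hp => subset_closure ?_⟩⟩
      refine mem_iUnion₂.2 ⟨J p, ?_, hJ p hp⟩
      rw [Finset.mem_range]
      exact Nat.lt_succ_of_le (Finset.le_sup hp)
    · exact mem_iUnion.2 ⟨0, Or.inr hr⟩
  have hdense := dense_iUnion_interior_of_closed hFc hFU
  obtain ⟨r0, hr0O, hr0⟩ := hdense.inter_open_nonempty O hO hOne
  obtain ⟨j, hj⟩ := mem_iUnion.1 hr0
  obtain ⟨η, hη, hball⟩ := Metric.isOpen_iff.1 (hO.inter isOpen_interior) r0 ⟨hr0O, hj⟩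
  have hgood : ∀ r ∈ Metric.ball r0 η, ∃ x, ∀ p ∈ P, x + p • r ∈ E j := by
    intro r hr
    obtain ⟨h1, h2⟩ := hball hr
    rcases interior_subset h2 with h | h
    · exact h
    · exact absurd h1 h
  set δ : ℝ := η / (n + 1) with hδ
  have hδ0 : 0 < δ := by positivity
  refine ⟨⋃ p ∈ P, (fun y => δ⁻¹ • (y - p • r0)) '' E j, ?_, ?_, ?_⟩
  · refine (isBounded_biUnion_finset _).2 fun p _ => IsCompact.isBounded ((hEc j).image ?_)
    fun_prop
  · intro s hs
    obtain ⟨x, hx⟩ := hgood (r0 + δ • s) (by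
      rw [Metric.mem_ball, dist_eq_norm, add_sub_cancel_left, norm_smul, Real.norm_eq_abs,
        abs_of_pos hδ0]
      have h1 := cube_norm_le s hs
      have : η = δ * (n + 1) := by rw [hδ]; field_simp
      nlinarith)
    refine ⟨δ⁻¹ • x, fun p hp => mem_iUnion₂.2 ⟨p, hp, _, hx p hp, ?_⟩⟩
    have e : x + p • (r0 + δ • s) - p • r0 = x + δ • (p • s) := by module
    change δ⁻¹ • (x + p • (r0 + δ • s) - p • r0) = _
    rw [e, smul_add, inv_smul_smul₀ hδ0.ne']
  · refine QCov.biUnion _ _ fun p _ => (hEQ j).image _ (δ⁻¹ + 1) (by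
      have : 0 < δ⁻¹ := by positivity
      linarith) fun x y => ?_
    rw [dist_smul₀, dist_sub_right, Real.norm_eq_abs, abs_of_pos (by positivity)]
    nlinarith [dist_nonneg (x := x) (y := y)]

/-- For every `n ≥ 1` and nonempty finite `P ⊂ ℝ`, the infimum of the Minkowski dimension over
bounded `B ⊆ ℝ^n` containing a `P`-pattern `{x + p·r : p ∈ P}` for every scaling factor
`r ∈ [0,1]^n` equals the infimum of the packing dimension over arbitrary such sets. -/
theorem stmt6 (n : ℕ) (hn : 1 ≤ n) (P : Finset ℝ) (hP : P.Nonempty) :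
    sInf { a : ℝ | ∃ B : Set (EuclideanSpace ℝ (Fin n)), IsBounded B ∧
        (∀ r : EuclideanSpace ℝ (Fin n), (∀ i, r i ∈ Icc (0 : ℝ) 1) →
          ∃ x : EuclideanSpace ℝ (Fin n), ∀ p ∈ P, x + p • r ∈ B) ∧
        a = dimM B } =
    sInf { a : ℝ | ∃ B : Set (EuclideanSpace ℝ (Fin n)),
        (∀ r : EuclideanSpace ℝ (Fin n), (∀ i, r i ∈ Icc (0 : ℝ) 1) →
          ∃ x : EuclideanSpace ℝ (Fin n), ∀ p ∈ P, x + p • r ∈ B) ∧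
        a = dimP B } := by
  have hbddM : BddBelow { a : ℝ | ∃ B : Set (EuclideanSpace ℝ (Fin n)), IsBounded B ∧
        (∀ r : EuclideanSpace ℝ (Fin n), (∀ i, r i ∈ Icc (0 : ℝ) 1) →
          ∃ x : EuclideanSpace ℝ (Fin n), ∀ p ∈ P, x + p • r ∈ B) ∧
        a = dimM B } := by
    refine ⟨0, ?_⟩
    rintro a ⟨B, hb, -, rfl⟩
    exact dimM_nonneg' hb
  obtain ⟨B₀, hB₀, hB₀'⟩ := exists_bounded_pattern n P
  apply le_antisymm
  · refine le_csInf ⟨_, B₀, hB₀', rfl⟩ ?_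
    rintro _ ⟨B, hB, rfl⟩
    apply le_of_forall_gt_imp_ge_of_dense
    intro a ha
    obtain ⟨B', h1, h2, h3⟩ := main_construction n P hP B hB ha
    exact (csInf_le hbddM ⟨B', h1, h2, rfl⟩).trans
      (h3.dimM_le ((dimP_nonneg' B).trans ha.le))
  · refine le_csInf ⟨_, B₀, hB₀, hB₀', rfl⟩ ?_
    rintro _ ⟨B, hb, hB, rfl⟩
    refine le_trans (csInf_le ?_ ⟨B, hB, rfl⟩) (dimP_le_dimM hb)
    refine ⟨0, ?_⟩
    rintro a ⟨B, -, rfl⟩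
    exact dimP_nonneg' B
end
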